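/- The operator 𝒟 := Σ_{γ∈Γ} D_γ T_γ is Fredholm on H if, and only if, the restriction of D̂ := Σ_{γ∈Γ} Q(D_γ⊗Id)Q(1⊗R_γ) to the closed subspace H_Γ^{T⊗L} of (T⊗L)-invariant vectors (which D̂ maps into itself) is Fredholm. -/

import Mathlib

open Finset

variable {Γ : Type*} [Group Γ] [Fintype Γ]
variable {H : Type*} [NormedAddCommGroup H] [InnerProductSpace ℂ H] [CompleteSpace H]

/-- The operator `1 ⊗ R_γ` on `H_Γ = {u : Γ → H}`: `((1 ⊗ R_γ) u)(γ') = u (γ' γ)`. -/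
def Rc (H : Type*) [NormedAddCommGroup H] [InnerProductSpace ℂ H]
    (γ : Γ) : (Γ → H) →L[ℂ] (Γ → H) :=
  ContinuousLinearMap.pi fun γ' => ContinuousLinearMap.proj (γ' * γ)

/-- The operator `T_γ ⊗ L_γ` on `H_Γ`: `((T_γ ⊗ L_γ) u)(γ') = T_γ (u (γ⁻¹ γ'))`. -/
def TLc (T : Γ →* (H ≃ₗᵢ[ℂ] H)) (γ : Γ) : (Γ → H) →L[ℂ] (Γ → H) :=
  ContinuousLinearMap.pi fun γ' =>
    ((T γ).toLinearIsometry.toContinuousLinearMap).comp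
      (ContinuousLinearMap.proj (γ⁻¹ * γ'))

/-- The operator `Q` on `H_Γ`: `(Q u)(γ') = T_{γ'} (u (γ'⁻¹))`. -/
def Qc (T : Γ →* (H ≃ₗᵢ[ℂ] H)) : (Γ → H) →L[ℂ] (Γ → H) :=
  ContinuousLinearMap.pi fun γ' =>
    ((T γ').toLinearIsometry.toContinuousLinearMap).comp
      (ContinuousLinearMap.proj γ'⁻¹)

/-- The operator `D ⊗ Id` on `H_Γ`: `((D ⊗ Id) u)(γ) = D (u γ)`. -/
def DtensorC (Γ : Type*) [Group Γ] [Fintype Γ]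
    (D : H →L[ℂ] H) : (Γ → H) →L[ℂ] (Γ → H) :=
  ContinuousLinearMap.pi fun γ => D.comp (ContinuousLinearMap.proj γ)

/-- The uniformized operator `D̂ = ∑_{γ ∈ Γ} Q (D_γ ⊗ Id) Q (1 ⊗ R_γ)` on `H_Γ`. -/
def DhatC (T : Γ →* (H ≃ₗᵢ[ℂ] H)) (D : Γ → (H →L[ℂ] H)) :
    (Γ → H) →L[ℂ] (Γ → H) :=
  ∑ γ : Γ, (Qc T).comp ((DtensorC Γ (D γ)).comp ((Qc T).comp (Rc H γ)))

/-- The `Γ`-operator `𝒟 = ∑_{γ ∈ Γ} D_γ T_γ` on `H`. -/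
def DopC (T : Γ →* (H ≃ₗᵢ[ℂ] H)) (D : Γ → (H →L[ℂ] H)) : H →L[ℂ] H :=
  ∑ γ : Γ, (D γ).comp ((T γ).toLinearIsometry.toContinuousLinearMap)

/-- The closed subspace `H_Γ^{T⊗L}` of `(T ⊗ L)`-invariant vectors of `H_Γ`. -/
def invSub (T : Γ →* (H ≃ₗᵢ[ℂ] H)) : Submodule ℂ (Γ → H) where
  carrier := {u : Γ → H | ∀ γ : Γ, TLc T γ u = u}
  add_mem' hu hv γ := by rw [map_add, hu γ, hv γ]
  zero_mem' γ := by rw [map_zero]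
  smul_mem' c u hu γ := by rw [map_smul, hu γ]

/-- A bounded operator between Hilbert spaces is Fredholm if it is invertible modulo
compact operators (Atkinson's theorem). -/
def IsFredholm {X Y : Type*} [NormedAddCommGroup X] [NormedSpace ℂ X]
    [NormedAddCommGroup Y] [NormedSpace ℂ Y] (A : X →L[ℂ] Y) : Prop :=
  ∃ S : Y →L[ℂ] X,
    IsCompactOperator ⇑(S.comp A - ContinuousLinearMap.id ℂ X) ∧
    IsCompactOperator ⇑(A.comp S - ContinuousLinearMap.id ℂ Y)


theorem isFredholm_of_conj {X Y : Type*} [NormedAddCommGroup X] [NormedSpace ℂ X]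
    [NormedAddCommGroup Y] [NormedSpace ℂ Y] (A : X →L[ℂ] X) (B : Y →L[ℂ] Y)
    (e : X ≃L[ℂ] Y) (h : ∀ x, B (e x) = e (A x)) (hA : IsFredholm A) : IsFredholm B := by
  obtain ⟨S, h1, h2⟩ := hA
  refine ⟨(e : X →L[ℂ] Y).comp (S.comp (e.symm : Y →L[ℂ] X)), ?_, ?_⟩
  · have := (h1.comp_clm (e.symm : Y →L[ℂ] X)).clm_comp (e : X →L[ℂ] Y)
    refine (congrArg IsCompactOperator (funext fun y => ?_)).mp this
    have hy := h (e.symm y)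
    rw [e.apply_symm_apply] at hy
    simp [hy]
  · have := (h2.comp_clm (e.symm : Y →L[ℂ] X)).clm_comp (e : X →L[ℂ] Y)
    refine (congrArg IsCompactOperator (funext fun y => ?_)).mp this
    simp [h]

theorem T_mul_apply (T : Γ →* (H ≃ₗᵢ[ℂ] H)) (a b : Γ) (x : H) :
    T a (T b x) = T (a * b) x := by
  rw [map_mul]; rfl

/-- `h ↦ (γ ↦ T_γ h)` as an isomorphism onto the invariant vectors. -/
noncomputable def invEquiv (T : Γ →* (H ≃ₗᵢ[ℂ] H)) : H ≃L[ℂ] invSub T :=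
  ContinuousLinearEquiv.equivOfInverse
    (ContinuousLinearMap.codRestrict
      (ContinuousLinearMap.pi fun γ => (T γ).toLinearIsometry.toContinuousLinearMap)
      (invSub T) (by
        intro x γ
        ext γ'
        change T γ (T (γ⁻¹ * γ') x) = T γ' x
        rw [T_mul_apply, mul_inv_cancel_left]))
    ((ContinuousLinearMap.proj (1 : Γ)).comp (invSub T).subtypeL)
    (by
      intro x
      change T 1 x = x
      simp)
    (by
      intro u
      ext γ
      change T γ (u.1 1) = u.1 γ
      have h := congrFun (u.2 γ) γ
      change T γ (u.1 (γ⁻¹ * γ)) = u.1 γ at h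
      rwa [inv_mul_cancel] at h)

theorem invEquiv_apply (T : Γ →* (H ≃ₗᵢ[ℂ] H)) (x : H) (γ : Γ) :
    (invEquiv T x).1 γ = T γ x := rfl

theorem DhatC_invEquiv (T : Γ →* (H ≃ₗᵢ[ℂ] H)) (D : Γ → (H →L[ℂ] H)) (x : H) :
    DhatC T D (invEquiv T x).1 = (invEquiv T (DopC T D x)).1 := by
  ext γ'
  rw [invEquiv_apply, DhatC, DopC, ContinuousLinearMap.sum_apply, ContinuousLinearMap.sum_apply,
    map_sum, Finset.sum_apply]
  refine Finset.sum_congr rfl fun γ _ => ?_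
  change T γ' (D γ (T γ'⁻¹ (T (γ'⁻¹⁻¹ * γ) x))) = T γ' (D γ (T γ x))
  rw [T_mul_apply, inv_inv, inv_mul_cancel_left]

/-- The `Γ`-operator `𝒟 = ∑_γ D_γ T_γ` is Fredholm on `H` if, and only if, the
restriction of the uniformized operator `D̂ = ∑_γ Q (D_γ ⊗ Id) Q (1 ⊗ R_γ)` to the
closed subspace `H_Γ^{T⊗L}` of `(T ⊗ L)`-invariant vectors (which `D̂` maps into
itself, since it commutes with all `T_γ ⊗ L_γ`) is Fredholm. -/
theorem isFredholm_Dop_iff_isFredholm_Dhat_restrict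
    (T : Γ →* (H ≃ₗᵢ[ℂ] H)) (D : Γ → (H →L[ℂ] H))
    (hinv : ∀ u ∈ invSub T, DhatC T D u ∈ invSub T) :
    IsFredholm (DopC T D) ↔
      IsFredholm (ContinuousLinearMap.codRestrict
        ((DhatC T D).comp (invSub T).subtypeL) (invSub T)
        (fun u => hinv u.1 u.2)) := by
  have key : ∀ x, (ContinuousLinearMap.codRestrict
        ((DhatC T D).comp (invSub T).subtypeL) (invSub T)
        (fun u => hinv u.1 u.2)) (invEquiv T x) = invEquiv T (DopC T D x) := fun x =>
    Subtype.ext (DhatC_invEquiv T D x)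
  refine ⟨isFredholm_of_conj _ _ (invEquiv T) key,
    isFredholm_of_conj _ _ (invEquiv T).symm fun y => ?_⟩
  rw [ContinuousLinearEquiv.eq_symm_apply, ← key, ContinuousLinearEquiv.apply_symm_apply]
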